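/- (2-shock curve) Let f_l, b_l, g_l, q_l, f, b, g, q be positive real numbers with b·f_l = b_l·f and q·g_l = q_l·g, and set σ = b_l·(f_l² + f_l·f + f²)/(2f_l). If in addition the third Rankine–Hugoniot relation 2σ(g − g_l) = g²q − g_l²q_l + 2(fbg − f_l b_l g_l) holds, then the left state U_l = (f_l, b_l, g_l, q_l), the right state U = (f, b, g, q) and the speed σ satisfy all four Rankine–Hugoniot conditions of the reduced two-phase thin-film system. -/

import Mathlib

/-- The Rankine–Hugoniot conditions of the reduced two-phase thin-film system
for a discontinuity between a left state `(fl, bl, gl, ql)` and a right state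
`(f, b, g, q)` travelling with speed `σ`. -/
def RankineHugoniot (σ fl bl gl ql f b g q : ℝ) : Prop :=
  σ * (f - fl) = (1/2) * (f^2*b - fl^2*bl) ∧
  σ * (b - bl) = (1/2) * (f*b^2 - fl*bl^2) ∧
  σ * (g - gl) = (1/2) * (g^2*q - gl^2*ql) + (f*b*g - fl*bl*gl) ∧
  σ * (q - ql) = (1/2) * (g*q^2 - gl*ql^2) + (f*b*q - fl*bl*ql)

/-!
The flux has the form `(φ f, φ b, ψ g, ψ q)` with `φ = f b / 2` and `ψ = g q / 2 + f b`, so the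
components `f`, `b` are transported with one velocity and `g`, `q` with another. When `(f, b)` is
proportional to `(f_l, b_l)` and `(g, q)` to `(g_l, q_l)`, the second and fourth jump relations are
therefore multiples of the first and third. Along `b / f = b_l / f_l` the first one reads
`2 σ (f - f_l) = (b_l / f_l) (f³ - f_l³)`, which the speed of the 2-shock solves.
-/

theorem jump_relation_of_proportional {R : Type*} [CommRing R] [NoZeroDivisors R]
    {σ φl φ xl yl x y : R} (hxl : xl ≠ 0) (hyx : y * xl = yl * x)
    (hx : σ * (x - xl) = φ * x - φl * xl) :
    σ * (y - yl) = φ * y - φl * yl := by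
  refine mul_right_cancel₀ hxl ?_
  calc σ * (y - yl) * xl = yl * (σ * (x - xl)) := by linear_combination σ * hyx
    _ = yl * (φ * x - φl * xl) := by rw [hx]
    _ = (φ * y - φl * yl) * xl := by linear_combination -φ * hyx

section Shock

variable {σ fl bl gl ql f b g q : ℝ}

theorem rankineHugoniot_iff_of_proportional (hfl : fl ≠ 0) (hgl : gl ≠ 0)
    (hbf : b * fl = bl * f) (hqg : q * gl = ql * g) :
    RankineHugoniot σ fl bl gl ql f b g q ↔
      σ * (f - fl) = (1 / 2) * (f ^ 2 * b - fl ^ 2 * bl) ∧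
      σ * (g - gl) = (1 / 2) * (g ^ 2 * q - gl ^ 2 * ql) + (f * b * g - fl * bl * gl) := by
  refine ⟨fun ⟨hf, _, hg, _⟩ => ⟨hf, hg⟩, fun ⟨hf, hg⟩ => ⟨hf, ?_, hg, ?_⟩⟩
  · have hb : σ * (b - bl) = f * b / 2 * b - fl * bl / 2 * bl :=
      jump_relation_of_proportional hfl hbf (by linear_combination hf)
    linear_combination hb
  · have hq : σ * (q - ql) = (g * q / 2 + f * b) * q - (gl * ql / 2 + fl * bl) * ql :=
      jump_relation_of_proportional hgl hqg (by linear_combination hg)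
    linear_combination hq

/-- The speed `σ = b_l (f_l² + f_l f + f²) / (2 f_l)` of the 2-shock joining the left state to a
right state with first component `f`; meaningful only for `fl ≠ 0`. -/
noncomputable def twoShockSpeed (fl bl f : ℝ) : ℝ :=
  bl * (fl ^ 2 + fl * f + f ^ 2) / (2 * fl)

theorem twoShockSpeed_mul_sub (hfl : fl ≠ 0) (hbf : b * fl = bl * f) :
    twoShockSpeed fl bl f * (f - fl) = (1 / 2) * (f ^ 2 * b - fl ^ 2 * bl) := by
  obtain rfl : b = bl * f / fl := eq_div_of_mul_eq hfl hbf
  unfold twoShockSpeed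
  field_simp
  ring

theorem two_shock_rankineHugoniot_general (hfl : fl ≠ 0) (hgl : gl ≠ 0)
    (hbf : b * fl = bl * f) (hqg : q * gl = ql * g) :
    RankineHugoniot (twoShockSpeed fl bl f) fl bl gl ql f b g q ↔
      2 * twoShockSpeed fl bl f * (g - gl)
        = g ^ 2 * q - gl ^ 2 * ql + 2 * (f * b * g - fl * bl * gl) := by
  rw [rankineHugoniot_iff_of_proportional hfl hgl hbf hqg,
    and_iff_right (twoShockSpeed_mul_sub hfl hbf)]
  constructor <;> intro h3
  · linear_combination 2 * h3
  · linear_combination (1 / 2) * h3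

end Shock

/-- 2-shock curve: if `b/f = b_l/f_l`, `q/g = q_l/g_l` and the third
Rankine–Hugoniot relation holds for the speed
`σ = b_l(f_l² + f_l f + f²)/(2f_l)`, then the left state
`U_l = (f_l, b_l, g_l, q_l)`, the right state `U = (f, b, g, q)` and `σ`
satisfy all four Rankine–Hugoniot conditions. -/
theorem two_shock_rankineHugoniot (fl bl gl ql f b g q : ℝ)
    (hfl : 0 < fl) (hbl : 0 < bl) (hgl : 0 < gl) (hql : 0 < ql)
    (hf : 0 < f) (hb : 0 < b) (hg : 0 < g) (hq : 0 < q)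
    (hbf : b * fl = bl * f) (hqg : q * gl = ql * g)
    (h3 : 2 * (bl * (fl^2 + fl*f + f^2) / (2*fl)) * (g - gl)
            = g^2*q - gl^2*ql + 2*(f*b*g - fl*bl*gl)) :
    RankineHugoniot (bl * (fl^2 + fl*f + f^2) / (2*fl)) fl bl gl ql f b g q :=
  (two_shock_rankineHugoniot_general hfl.ne' hgl.ne' hbf hqg).2 h3
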